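/- Assume for each player i: (a) X_i ⊆ ℝ^{n_i} is nonempty, closed and convex; (b) K_i : X ⇉ ℝ^{n_i} is a closed and lower semicontinuous set-valued map with nonempty convex values; (c) P_i : ℝ^n ⇉ ℝ^{n_i} has open graph, i.e. {(x,y_i) ∈ ℝ^n × ℝ^{n_i} : y_i ∈ P_i(x)} is open; (d) x_i ∉ co(P_i(x)) for every x ∈ ∏_i co(cl(K_i(X))). If, in addition, each K_i(X) = ⋃_{x∈X} K_i(x) is relatively compact, then the generalized Nash game Γ = (X_i,K_i,P_i)_i admits a projected solution (no boundedness of the choice sets X_i is assumed). -/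

import Mathlib

open scoped RealInnerProductSpace

/-- `ℝ^m` as a Euclidean space. -/
abbrev Vec (m : ℕ) : Type := EuclideanSpace ℝ (Fin m)

/-- The joint strategy space `ℝ^n = ∏_{i=1}^N ℝ^{n_i}`. -/
abbrev Strat (N : ℕ) (d : Fin N → ℕ) : Type := PiLp 2 fun i : Fin N => Vec (d i)

/-- Lower semicontinuity of a set-valued map `F` on a set `A`. -/
def LscOn {α β : Type*} [TopologicalSpace α] [TopologicalSpace β]
    (F : α → Set β) (A : Set α) : Prop :=
  ∀ a ∈ A, ∀ V : Set β, IsOpen V → (F a ∩ V).Nonempty →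
    ∃ U : Set α, IsOpen U ∧ a ∈ U ∧ ∀ a' ∈ U ∩ A, (F a' ∩ V).Nonempty

section ProjectedHelpers

open Set Filter Topology MeasureTheory

lemma det_lagrange {E : Type*} [NormedAddCommGroup E] [InnerProductSpace ℝ E]
    [FiniteDimensional ℝ E] (A : E →L[ℝ] E) (v : ℕ → ℝ) (hv : Function.Injective v) :
    (ContinuousLinearMap.id ℝ E + (1 : ℝ) • A).det =
      ∑ j ∈ Finset.range (Module.finrank ℝ E + 1),
        (ContinuousLinearMap.id ℝ E + v j • A).det *
          (Lagrange.basis (Finset.range (Module.finrank ℝ E + 1)) v j).eval 1 := by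
  set b := Module.finBasis ℝ E
  set M := LinearMap.toMatrix b b (A : E →ₗ[ℝ] E)
  set q : Polynomial ℝ := Matrix.det ((Polynomial.X : Polynomial ℝ) • M.map Polynomial.C
    + (1 : Matrix _ _ ℝ).map Polynomial.C) with hq
  have hdeg : q.natDegree ≤ Module.finrank ℝ E := by
    have := Polynomial.natDegree_det_X_add_C_le M 1
    rwa [Fintype.card_fin] at this
  have hev : ∀ t : ℝ, (ContinuousLinearMap.id ℝ E + t • A).det = q.eval t := by
    intro t
    rw [ContinuousLinearMap.det, ← LinearMap.det_toMatrix b, hq, ← Polynomial.coe_evalRingHom,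
      RingHom.map_det]
    congr 1
    ext i j
    simp [M, Matrix.one_apply, LinearMap.toMatrix_apply, Finsupp.single_apply, add_comm, apply_ite, eq_comm]
    ring
  simp only [hev]
  have := Lagrange.eq_interpolate (s := Finset.range (Module.finrank ℝ E + 1)) (v := v) (f := q)
    hv.injOn (by
      refine lt_of_le_of_lt Polynomial.degree_le_natDegree ?_
      rw [Finset.card_range]
      exact_mod_cast Nat.lt_succ_of_le hdeg)
  conv_lhs => rw [this]
  simp [Lagrange.interpolate_apply, Polynomial.eval_finsetSum]

lemma lipschitz_ball_ext {E : Type*} [NormedAddCommGroup E] [InnerProductSpace ℝ E]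
    (h : E → E) (ρ : ℝ) (L : NNReal)
    (hL : LipschitzOnWith L h (Metric.closedBall 0 ρ)) (h0 : ∀ x, ‖x‖ = ρ → h x = 0) :
    LipschitzWith L ((Metric.closedBall (0 : E) ρ).indicator h) := by
  have key : ∀ x y : E, x ∈ Metric.closedBall (0 : E) ρ → y ∉ Metric.closedBall (0 : E) ρ →
      ‖h x‖ ≤ L * ‖x - y‖ := by
    intro x y hx hy
    have hx' : ‖x‖ ≤ ρ := by simpa using hx
    have hy' : ρ < ‖y‖ := by simpa using hy
    have hc : ContinuousOn (fun s : ℝ => ‖x + s • (y - x)‖) (Icc 0 1) := by fun_prop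
    have := intermediate_value_Icc (zero_le_one) hc
    obtain ⟨s, hs, hs1⟩ := this (show ρ ∈ _ from ⟨by simpa using hx', by simpa using hy'.le⟩)
    have h1 := hL.dist_le_mul x hx (x + s • (y - x)) (by simpa using hs1.le)
    rw [h0 _ hs1, dist_zero_right, dist_eq_norm] at h1
    refine h1.trans ?_
    gcongr
    rw [sub_add_cancel_left, norm_neg, norm_smul, Real.norm_of_nonneg hs.1, norm_sub_rev x y]
    nlinarith [norm_nonneg (y - x), hs.2]
  refine LipschitzWith.of_dist_le_mul fun x y => ?_
  by_cases hx : x ∈ Metric.closedBall (0 : E) ρ <;> by_cases hy : y ∈ Metric.closedBall (0 : E) ρ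
  · rw [indicator_of_mem hx, indicator_of_mem hy]; exact hL.dist_le_mul x hx y hy
  · rw [indicator_of_mem hx, indicator_of_notMem hy, dist_zero_right, dist_eq_norm]
    exact key x y hx hy
  · rw [indicator_of_notMem hx, indicator_of_mem hy, dist_zero_left, dist_comm, dist_eq_norm]
    exact key y x hy hx
  · rw [indicator_of_notMem hx, indicator_of_notMem hy, dist_self]; positivity

lemma no_retraction {E : Type*} [NormedAddCommGroup E] [InnerProductSpace ℝ E]
    [FiniteDimensional ℝ E] [MeasurableSpace E] [BorelSpace E]
    (r : E → E) (hr : ContDiff ℝ 1 r) (ρ : ℝ) (hρ : 0 < ρ)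
    (h1 : ∀ x, ‖r x‖ = ρ) (h2 : ∀ x, ‖x‖ = ρ → r x = x) : False := by
  set B := Metric.closedBall (0 : E) ρ with hB
  set μ : Measure E := volume
  have hBc : IsCompact B := isCompact_closedBall 0 ρ
  have hBconv : Convex ℝ B := convex_closedBall 0 ρ
  set h : E → E := fun x => r x - x with hh
  have hhc : ContDiff ℝ 1 h := hr.sub contDiff_id
  have hdc : Continuous (fderiv ℝ h) := hhc.continuous_fderiv one_ne_zero
  have hhd : ∀ x, HasFDerivAt h (fderiv ℝ h x) x := fun x =>
    (hhc.differentiable one_ne_zero x).hasFDerivAt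
  -- Lipschitz
  obtain ⟨L, hL⟩ : ∃ L : NNReal, LipschitzOnWith L h B := by
    obtain ⟨C, hC⟩ := hBc.exists_bound_of_continuousOn hdc.continuousOn
    refine ⟨C.toNNReal, hBconv.lipschitzOnWith_of_nnnorm_hasFDerivWithin_le
      (fun x _ => (hhd x).hasFDerivWithinAt) fun x hx => ?_⟩
    rw [← NNReal.coe_le_coe, coe_nnnorm]
    exact (hC x hx).trans (Real.le_coe_toNNReal C)
  have hH := lipschitz_ball_ext h ρ L hL (fun x hx => by simp [hh, h2 x hx])
  -- determinants
  set D : ℝ → E → ℝ := fun t x => (ContinuousLinearMap.id ℝ E + t • fderiv ℝ h x).det with hD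
  have hDc : Continuous (fun z : ℝ × E => D z.1 z.2) := by
    apply ContinuousLinearMap.continuous_det.comp
    fun_prop
  have hDpos : ∀ᶠ t in 𝓝 (0 : ℝ), ∀ x ∈ B, 0 < D t x := by
    apply hBc.eventually_forall_of_forall_eventually
    intro y _
    have := hDc.tendsto (0, y)
    refine this.eventually (lt_mem_nhds ?_)
    simp [hD, ContinuousLinearMap.det]
  have hDint : ∀ t, IntegrableOn (D t) B μ := fun t =>
    ContinuousOn.integrableOn_compact hBc
      (hDc.comp (Continuous.prodMk_right t)).continuousOn
  have hsmall : ∀ᶠ t in 𝓝 (0 : ℝ), |t| * (L : ℝ) < 1 := by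
    have : Continuous fun t : ℝ => |t| * (L : ℝ) := by fun_prop
    exact (this.tendsto 0).eventually (gt_mem_nhds (by simp))
  obtain ⟨ε, hε, hball⟩ := Metric.eventually_nhds_iff.1 (hDpos.and hsmall)
  -- volume
  have hvol : ∀ t : ℝ, 0 ≤ t → t ≤ 1 → t < ε → ∫ x in B, D t x ∂μ = μ.real B := by
    intro t ht0 ht1 htε
    obtain ⟨hp, hs⟩ := hball (y := t) (by simpa [abs_of_nonneg ht0] using htε)
    rw [abs_of_nonneg ht0] at hs
    set g : E → E := fun x => x + t • h x with hg
    have hinj : InjOn g B := by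
      intro x hx y hy hxy
      have e : x - y = - (t • (h x - h y)) := by
        simp only [hg] at hxy
        rw [smul_sub, neg_sub, sub_eq_sub_iff_add_eq_add, hxy, add_comm]
      have h3 := hL.dist_le_mul x hx y hy
      rw [dist_eq_norm, dist_eq_norm] at h3
      have h4 : ‖x - y‖ = t * ‖h x - h y‖ := by
        conv_lhs => rw [e]
        rw [norm_neg, norm_smul, Real.norm_of_nonneg ht0]
      have h5 : ‖x - y‖ ≤ (t * L) * ‖x - y‖ := by
        rw [h4] at h3 ⊢
        calc t * ‖h x - h y‖ ≤ t * (L * (t * ‖h x - h y‖)) := by gcongr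
          _ = _ := by ring
      have h6 : ‖x - y‖ = 0 := by nlinarith [norm_nonneg (x - y)]
      exact sub_eq_zero.1 (norm_eq_zero.1 h6)
    have himg : g '' B = B := by
      apply Subset.antisymm
      · rintro _ ⟨x, hx, rfl⟩
        have : g x = (1 - t) • x + t • r x := by
          simp only [hg, hh, smul_sub, sub_smul, one_smul]; abel
        rw [this]
        exact hBconv hx (by simp [hB, h1]) (by linarith) ht0 (by ring)
      · intro y hy
        have hcon : ContractingWith (t.toNNReal * L) (fun x => y - t • B.indicator h x) := by
          refine ⟨?_, LipschitzWith.of_dist_le_mul fun x x' => ?_⟩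
          · rw [← NNReal.coe_lt_coe]; simpa [ht0] using hs
          · have := hH.dist_le_mul x x'
            rw [dist_sub_left, dist_smul₀, Real.norm_of_nonneg ht0]
            simp only [NNReal.coe_mul, Real.coe_toNNReal t ht0]
            rw [mul_assoc]
            gcongr
        have hfix : y - t • B.indicator h (hcon.fixedPoint _) = hcon.fixedPoint _ :=
          hcon.fixedPoint_isFixedPt
        set x := hcon.fixedPoint _ with hxdef
        by_cases hx : x ∈ B
        · refine ⟨x, hx, ?_⟩
          rw [indicator_of_mem hx] at hfix
          simp only [hg]
          rw [← hfix]
          rw [hfix]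
          exact (eq_add_of_sub_eq hfix).symm
        · rw [indicator_of_notMem hx, smul_zero, sub_zero] at hfix
          exact absurd (hfix ▸ hy) hx
    have hder : ∀ x ∈ B, HasFDerivWithinAt g
        (ContinuousLinearMap.id ℝ E + t • fderiv ℝ h x) B x := fun x _ =>
      ((hasFDerivAt_id x).add ((hhd x).const_smul t)).hasFDerivWithinAt
    have := integral_image_eq_integral_abs_det_fderiv_smul μ hBc.measurableSet hder hinj
      (fun _ => (1 : ℝ))
    rw [himg] at this
    simp only [smul_eq_mul, mul_one, integral_const] at this
    rw [show μ.real B = (μ.restrict B).real univ by simp [measureReal_restrict_apply], this]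
    refine setIntegral_congr_fun hBc.measurableSet fun x hx => ?_
    exact (abs_of_pos (hp x hx)).symm
  -- zero determinant at time one
  have hD1 : ∀ x, D 1 x = 0 := by
    intro x
    have e : ContinuousLinearMap.id ℝ E + (1 : ℝ) • fderiv ℝ h x = fderiv ℝ r x := by
      have : HasFDerivAt h (fderiv ℝ r x - ContinuousLinearMap.id ℝ E) x :=
        (hr.differentiable one_ne_zero x).hasFDerivAt.sub (hasFDerivAt_id x)
      rw [this.fderiv]; simp
    simp only [hD]
    rw [e]
    by_contra hne
    have hsurj : Function.Surjective (fderiv ℝ r x) := by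
      have := (LinearMap.equivOfDetNeZero (fderiv ℝ r x : E →ₗ[ℝ] E) hne).surjective
      exact this
    obtain ⟨w, hw⟩ := hsurj (r x)
    have hd := (hr.differentiable one_ne_zero x).hasFDerivAt
    have h3 := hd.norm_sq
    have h4 : HasFDerivAt (fun y => ‖r y‖ ^ 2) (0 : E →L[ℝ] ℝ) x := by
      simp only [h1]; exact hasFDerivAt_const _ _
    have h5 := congrArg (fun T : E →L[ℝ] ℝ => T w) (h3.unique h4)
    simp [hw, h1] at h5
    linarith
  -- nodes
  set m := min 1 ε
  have hm : 0 < m := lt_min one_pos hε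
  set v : ℕ → ℝ := fun j => m / (j + 2) with hvdef
  have hv0 : ∀ j, 0 < v j := fun j => by positivity
  have hvm : ∀ j, v j < m := fun j => by
    rw [hvdef]; simp only; rw [div_lt_iff₀ (by positivity)]; nlinarith [(Nat.cast_nonneg j : (0:ℝ) ≤ j)]
  have hvinj : Function.Injective v := by
    intro i j hij
    simp only [hvdef] at hij
    rw [div_eq_div_iff (by positivity) (by positivity)] at hij
    have := mul_left_cancel₀ hm.ne' hij
    exact_mod_cast (add_right_cancel this).symm
  have hpt : ∀ x, D 1 x = _ := fun x => det_lagrange (fderiv ℝ h x) v hvinj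
  have hI : ∫ x in B, D 1 x ∂μ = μ.real B := by
    simp_rw [hpt]
    rw [integral_finsetSum _ (fun j _ => (hDint (v j)).mul_const _)]
    have : ∀ j, ∫ x in B, (ContinuousLinearMap.id ℝ E + v j • fderiv ℝ h x).det *
        (Lagrange.basis (Finset.range (Module.finrank ℝ E + 1)) v j).eval 1 ∂μ
        = μ.real B * (Lagrange.basis (Finset.range (Module.finrank ℝ E + 1)) v j).eval 1 := by
      intro j
      rw [integral_mul_const]
      congr 1
      exact hvol (v j) (hv0 j).le ((hvm j).le.trans (min_le_left _ _))
        ((hvm j).trans_le (min_le_right _ _))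
    rw [Finset.sum_congr rfl (fun j _ => this j)]
    rw [← Finset.mul_sum, ← Polynomial.eval_finsetSum, Lagrange.sum_basis hvinj.injOn (by simp)]
    simp
  simp only [hD1, integral_zero] at hI
  have : 0 < μ.real B := by
    rw [measureReal_def, ENNReal.toReal_pos_iff]
    exact ⟨Metric.measure_closedBall_pos μ 0 hρ, hBc.measure_lt_top⟩
  linarith

lemma smooth_fixed_point {E : Type*} [NormedAddCommGroup E] [InnerProductSpace ℝ E]
    [FiniteDimensional ℝ E] (g : E → E) (hg : ContDiff ℝ 1 g) (R : ℝ) (hR : ∀ x, ‖g x‖ ≤ R) :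
    ∃ x, g x = x := by
  by_contra! hne
  let _ : MeasurableSpace E := borel E
  have : BorelSpace E := ⟨rfl⟩
  have hR0 : 0 ≤ R := (norm_nonneg _).trans (hR 0)
  let χ : ContDiffBump (0 : E) := ⟨R + 1, R + 2, by linarith, by linarith⟩
  set v : E → E := fun x => x - χ x • g x with hv
  have hvc : ContDiff ℝ 1 v := contDiff_id.sub (χ.contDiff.smul hg)
  have hv0 : ∀ x, v x ≠ 0 := by
    intro x hx
    have hx' : x = χ x • g x := sub_eq_zero.1 hx
    have hn : ‖x‖ ≤ R := by
      rw [hx', norm_smul, Real.norm_of_nonneg χ.nonneg]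
      calc χ x * ‖g x‖ ≤ 1 * ‖g x‖ := by gcongr; exact χ.le_one
        _ ≤ R := by rw [one_mul]; exact hR x
    have h1 : χ x = 1 := χ.one_of_mem_closedBall (by
      simp only [mem_closedBall_zero_iff, χ]; linarith)
    rw [h1, one_smul] at hx'
    exact hne x hx'.symm
  have hnv : ∀ x, ‖v x‖ ≠ 0 := fun x => norm_ne_zero_iff.2 (hv0 x)
  refine no_retraction (fun x => ((R + 2) / ‖v x‖) • v x) ?_ (R + 2) (by linarith) ?_ ?_
  · exact (contDiff_const.div (hvc.norm ℝ hv0) hnv).smul hvc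
  · intro x
    rw [norm_smul, norm_div, norm_norm, div_mul_cancel₀ _ (hnv x), Real.norm_of_nonneg (by linarith)]
  · intro x hx
    have h1 : χ x = 0 := χ.zero_of_le_dist (by simp [χ, hx])
    have : v x = x := by simp [hv, h1]
    simp only [this, hx]
    rw [div_self (by linarith), one_smul]

open scoped Manifold ContDiff in
lemma kakutani_hull {E : Type*} [NormedAddCommGroup E] [InnerProductSpace ℝ E]
    [FiniteDimensional ℝ E] (F : E → Set E) (Q : Set E) (hQ : IsCompact Q)
    (hne : ∀ x, (F x).Nonempty) (hFQ : ∀ x, F x ⊆ Q) (hcl : IsClosed {z : E × E | z.2 ∈ F z.1}) :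
    ∃ x, x ∈ closure (convexHull ℝ (F x)) := by
  obtain ⟨R, hR⟩ := hQ.isBounded.subset_closedBall (0 : E)
  have step : ∀ ε > 0, ∃ x, x ∈ convexHull ℝ (⋃ x' ∈ Metric.ball x ε, F x') := by
    intro ε hε
    obtain ⟨g, hg⟩ := exists_contMDiffMap_forall_mem_convex_of_local_const (n := 1) 𝓘(ℝ, E)
      (t := fun x : E => convexHull ℝ (⋃ x' ∈ Metric.ball x ε, F x'))
      (fun x => convex_convexHull ℝ _) (fun x => by
        obtain ⟨c, hc⟩ := hne x
        refine ⟨c, ?_⟩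
        filter_upwards [Metric.ball_mem_nhds x hε] with y hy
        apply subset_convexHull
        simp only [mem_iUnion]
        exact ⟨x, Metric.mem_ball_comm.1 hy, hc⟩)
    obtain ⟨x, hx⟩ := smooth_fixed_point g g.contMDiff.contDiff R (fun x => by
      have : convexHull ℝ (⋃ x' ∈ Metric.ball x ε, F x') ⊆ Metric.closedBall 0 R :=
        convexHull_min (by
          simp only [iUnion_subset_iff]
          exact fun i _ => (hFQ i).trans hR) (convex_closedBall _ _)
      simpa using this (hg x))
    have := hg x
    rw [hx] at this
    exact ⟨x, this⟩
  choose! u hu using step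
  have hub : ∀ n : ℕ, u (1 / (n + 1)) ∈ Metric.closedBall (0 : E) R := by
    intro n
    refine convexHull_min ?_ (convex_closedBall _ _) (hu (1 / (n + 1)) (by positivity))
    simp only [iUnion_subset_iff]
    exact fun i _ => (hFQ i).trans hR
  obtain ⟨x, -, φ, hφ, hlim⟩ := (isCompact_closedBall (0 : E) R).tendsto_subseq hub
  refine ⟨x, ?_⟩
  rw [Metric.mem_closure_iff_infDist_zero ((hne x).convexHull)]
  refine le_antisymm (le_of_forall_pos_le_add fun δ hδ => ?_) Metric.infDist_nonneg
  set T := Metric.thickening δ (F x) with hT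
  have husc : ∀ᶠ x' in 𝓝 x, ∀ z ∈ Q \ T, z ∉ F x' := by
    apply (hQ.diff Metric.isOpen_thickening).eventually_forall_of_forall_eventually
    intro z hz
    exact hcl.isOpen_compl.mem_nhds (fun hzF => hz.2 (Metric.self_subset_thickening hδ _ hzF))
  obtain ⟨η, hη, hball⟩ := Metric.eventually_nhds_iff.1 husc
  have hT2 : T ⊆ Metric.thickening δ (convexHull ℝ (F x)) :=
    Metric.thickening_subset_of_subset _ (subset_convexHull ℝ _)
  have hev : ∀ᶠ n in atTop, Metric.infDist (u (1 / ((φ n : ℝ) + 1))) (convexHull ℝ (F x)) ≤ δ := by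
    have h1 : ∀ᶠ n in atTop, dist (u (1 / ((φ n : ℝ) + 1))) x < η / 2 :=
      (Metric.tendsto_nhds.1 hlim) (η / 2) (by linarith)
    have h2 : ∀ᶠ n in atTop, 1 / ((φ n : ℝ) + 1) < η / 2 :=
      (tendsto_one_div_add_atTop_nhds_zero_nat.comp hφ.tendsto_atTop).eventually
        (gt_mem_nhds (by linarith))
    filter_upwards [h1, h2] with n hn1 hn2
    have hm := hu (1 / ((φ n : ℝ) + 1)) (by positivity)
    have : u (1 / ((φ n : ℝ) + 1)) ∈ Metric.thickening δ (convexHull ℝ (F x)) := by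
      refine convexHull_min ?_ ((convex_convexHull ℝ _).thickening δ) hm
      simp only [iUnion_subset_iff]
      intro x' hx' z hz
      apply hT2
      by_contra hzT
      refine hball ?_ z ⟨hFQ _ hz, hzT⟩ hz
      rw [Metric.mem_ball] at hx'
      linarith [dist_triangle x' (u (1 / ((φ n : ℝ) + 1))) x]
    obtain ⟨w, hw, hd⟩ := Metric.mem_thickening_iff.1 this
    exact (Metric.infDist_le_dist_of_mem hw).trans hd.le
  rw [zero_add]
  exact le_of_tendsto ((Metric.continuous_infDist_pt _).tendsto x |>.comp hlim) hev

lemma exists_proj {E : Type*} [NormedAddCommGroup E] [InnerProductSpace ℝ E]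
    [FiniteDimensional ℝ E] (X : Set E) (hne : X.Nonempty) (hcl : IsClosed X)
    (hconv : Convex ℝ X) :
    ∃ p : E → E, Continuous p ∧ ∀ y, p y ∈ X ∧ ‖y - p y‖ = ⨅ w : X, ‖y - (w : E)‖ := by
  choose p hpX hp using exists_norm_eq_iInf_of_complete_convex hne hcl.isComplete hconv
  refine ⟨p, ?_, fun y => ⟨hpX y, hp y⟩⟩
  have hin := fun y => (norm_eq_iInf_iff_real_inner_le_zero hconv (hpX y)).1 (hp y)
  refine (LipschitzWith.of_dist_le_mul (K := 1) fun a b => ?_).continuous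
  have h1 := hin a (p b) (hpX b)
  have h2 := hin b (p a) (hpX a)
  have h3 : inner ℝ (p a - p b) (p a - p b) ≤ inner ℝ (a - b) (p a - p b) := by
    have e : inner ℝ (a - b) (p a - p b) - inner ℝ (p a - p b) (p a - p b)
       = - (inner ℝ (a - p a) (p b - p a)) - inner ℝ (b - p b) (p a - p b) := by
      simp only [inner_sub_left, inner_sub_right]; ring
    linarith
  rw [real_inner_self_eq_norm_sq] at h3
  have h4 := real_inner_le_norm (a - b) (p a - p b)
  rw [dist_eq_norm, dist_eq_norm, NNReal.coe_one, one_mul]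
  by_contra! hlt
  have : 0 ≤ ‖a - b‖ := norm_nonneg _
  nlinarith

lemma isClosed_argmax {α β : Type*} [TopologicalSpace α] [TopologicalSpace β]
    (K : α → Set β) (U : α × β → ℝ) (hU : Continuous U)
    (hK : ∀ y, ∀ V : Set β, IsOpen V → (K y ∩ V).Nonempty → ∀ᶠ y' in 𝓝 y, (K y' ∩ V).Nonempty) :
    IsClosed {q : α × β | ∀ w ∈ K q.1, U (q.1, w) ≤ U (q.1, q.2)} := by
  rw [← isOpen_compl_iff, isOpen_iff_mem_nhds]
  rintro ⟨y, z⟩ hyz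
  simp only [Set.mem_compl_iff, Set.mem_ofPred_eq, not_forall, not_le] at hyz
  obtain ⟨w, hw, hlt⟩ := hyz
  have hO : IsOpen {s : (α × β) × β | U (s.1.1, s.1.2) < U (s.1.1, s.2)} :=
    isOpen_lt (by fun_prop) (by fun_prop)
  obtain ⟨S, V, hS, hV, hyS, hwV, hSV⟩ := isOpen_prod_iff.1 hO (y, z) w hlt
  have hW := continuous_fst.tendsto (y, z) |>.eventually (hK y V hV ⟨w, hw, hwV⟩)
  filter_upwards [hS.mem_nhds hyS, hW] with q hq1 hq2
  obtain ⟨w', hw', hw'V⟩ := hq2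
  simp only [Set.mem_compl_iff, Set.mem_ofPred_eq, not_forall, not_le]
  have h3 : (q, w') ∈ S ×ˢ V := ⟨hq1, hw'V⟩
  exact ⟨w', hw', hSV h3⟩

end ProjectedHelpers

/-- Under (a) each `X_i` nonempty closed convex (possibly
unbounded), (b) each `K_i` closed and l.s.c. with nonempty convex values on `X`,
(c) each `P_i` with open graph, (d) `x_i ∉ co(P_i(x))` for every
`x ∈ ∏_i co(cl(K_i(X)))`, and with each `K_i(X)` relatively compact, the
generalized Nash game `Γ = (X_i, K_i, P_i)_i` admits a projected solution. -/
theorem exists_projected_solution_GNEP_noncompact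
    (N : ℕ) (hN : 1 ≤ N) (d : Fin N → ℕ)
    (Xi : ∀ i : Fin N, Set (Vec (d i)))
    (Ki : ∀ i : Fin N, Strat N d → Set (Vec (d i)))
    (P : ∀ i : Fin N, Strat N d → Set (Vec (d i)))
    -- the joint choice set `X = ∏ X_i`
    (X : Set (Strat N d)) (hX : X = {x : Strat N d | ∀ i, x i ∈ Xi i})
    -- the set `∏_i co(cl(K_i(X)))`
    (Q : Set (Strat N d))
    (hQ : Q = {y : Strat N d | ∀ i, y i ∈ convexHull ℝ (closure (⋃ x ∈ X, Ki i x))})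
    -- (a) each `X_i` is nonempty, closed and convex
    (ha : ∀ i, (Xi i).Nonempty ∧ IsClosed (Xi i) ∧ Convex ℝ (Xi i))
    -- (b) each `K_i` is a closed l.s.c. map with nonempty convex values on `X`
    (hbclosed : ∀ i, IsClosed {q : Strat N d × Vec (d i) | q.1 ∈ X ∧ q.2 ∈ Ki i q.1})
    (hblsc : ∀ i, LscOn (Ki i) X)
    (hbval : ∀ i, ∀ x ∈ X, (Ki i x).Nonempty ∧ Convex ℝ (Ki i x))
    -- (c) each `P_i` has open graph
    (hc : ∀ i, IsOpen {q : Strat N d × Vec (d i) | q.2 ∈ P i q.1})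
    -- (d) `x_i ∉ co(P_i(x))` for every `x ∈ Q`
    (hd : ∀ i, ∀ x ∈ Q, x i ∉ convexHull ℝ (P i x))
    -- each `K_i(X)` is relatively compact
    (hKrel : ∀ i, IsCompact (closure (⋃ x ∈ X, Ki i x))) :
    -- the GNEP `Γ` admits a projected solution
    ∃ xt ∈ X, ∃ yt : Strat N d,
      (‖yt - xt‖ = ⨅ w : X, ‖yt - (w : Strat N d)‖) ∧
      ∀ i : Fin N, yt i ∈ Ki i xt ∧ P i yt ∩ Ki i xt = ∅ := by
  obtain ⟨p, hpc, hp⟩ := exists_proj X (by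
    choose x0 hx0 using fun i => (ha i).1
    exact ⟨WithLp.toLp 2 x0, by rw [hX]; exact hx0⟩)
    (by
      rw [hX, Set.ofPred_forall]
      exact isClosed_iInter fun i => (ha i).2.1.preimage (PiLp.continuous_apply 2 _ i))
    (by
      rw [hX]
      intro x hx y hy a b ha' hb' hab i
      exact (ha i).2.2 (hx i) (hy i) ha' hb' hab)
  set G : ∀ i, Set (Strat N d × Vec (d i)) := fun i => {q | q.2 ∈ P i q.1} with hG
  set U : ∀ i, Strat N d × Vec (d i) → ℝ := fun i q => Metric.infDist q (G i)ᶜ with hU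
  have hUc : ∀ i, Continuous (U i) := fun i => Metric.continuous_infDist_pt _
  set A : ∀ i, Strat N d → Set (Vec (d i)) := fun i y =>
    {z | z ∈ Ki i (p y) ∧ ∀ w ∈ Ki i (p y), U i (y, w) ≤ U i (y, z)} with hA
  set F : Strat N d → Set (Strat N d) := fun y => {z | ∀ i, z i ∈ A i y} with hF
  have hKsub : ∀ i y, Ki i (p y) ⊆ closure (⋃ x ∈ X, Ki i x) := fun i y z hz =>
    subset_closure (Set.mem_biUnion (hp y).1 hz)
  have hKcl : ∀ i y, IsClosed (Ki i (p y)) := by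
    intro i y
    have : Ki i (p y) = (fun z => (p y, z)) ⁻¹'
        {q : Strat N d × Vec (d i) | q.1 ∈ X ∧ q.2 ∈ Ki i q.1} := by
      ext z; simp [(hp y).1]
    rw [this]
    exact (hbclosed i).preimage (Continuous.prodMk_right _)
  have hKcomp : ∀ i y, IsCompact (Ki i (p y)) := fun i y =>
    (hKrel i).of_isClosed_subset (hKcl i y) (hKsub i y)
  have hAne : ∀ i y, (A i y).Nonempty := by
    intro i y
    obtain ⟨z, hz, hmax⟩ := (hKcomp i y).exists_isMaxOn (hbval i _ (hp y).1).1
      (((hUc i).comp (Continuous.prodMk_right y)).continuousOn)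
    exact ⟨z, hz, fun w hw => hmax hw⟩
  have hAclosed : ∀ i, IsClosed {q : Strat N d × Vec (d i) | q.2 ∈ A i q.1} := by
    intro i
    have e : {q : Strat N d × Vec (d i) | q.2 ∈ A i q.1} =
        {q | q.2 ∈ Ki i (p q.1)} ∩
        {q | ∀ w ∈ Ki i (p q.1), U i (q.1, w) ≤ U i (q.1, q.2)} := by
      ext q; rfl
    rw [e]
    apply IsClosed.inter
    · have e2 : {q : Strat N d × Vec (d i) | q.2 ∈ Ki i (p q.1)} =
          (fun q : Strat N d × Vec (d i) => (p q.1, q.2)) ⁻¹'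
            {q : Strat N d × Vec (d i) | q.1 ∈ X ∧ q.2 ∈ Ki i q.1} := by
        ext q; simp [(hp q.1).1]
      rw [e2]
      exact (hbclosed i).preimage (by fun_prop)
    · exact isClosed_argmax (fun y => Ki i (p y)) (U i) (hUc i) (fun y V hV hne => by
        obtain ⟨W, hW, hyW, hWK⟩ := hblsc i (p y) (hp y).1 V hV hne
        filter_upwards [(hW.preimage hpc).mem_nhds hyW] with y' hy'
        exact hWK (p y') ⟨hy', (hp y').1⟩)
  have hQcomp : IsCompact {z : Strat N d | ∀ i, z i ∈ closure (⋃ x ∈ X, Ki i x)} := by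
    have h1 := (isCompact_univ_pi hKrel).image
      (PiLp.continuous_toLp 2 (fun i : Fin N => Vec (d i)))
    convert h1 using 1
    ext z
    constructor
    · intro hz
      exact ⟨WithLp.ofLp z, fun i _ => hz i, rfl⟩
    · rintro ⟨w, hw, rfl⟩ i
      exact hw i (Set.mem_univ i)
  obtain ⟨y, hy⟩ := kakutani_hull F _ hQcomp
    (fun y => by
      choose z hz using fun i => hAne i y
      exact ⟨WithLp.toLp 2 z, hz⟩)
    (fun y z hz i => hKsub i y (hz i).1)
    (by
      have : {z : Strat N d × Strat N d | z.2 ∈ F z.1} =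
          ⋂ i, {z : Strat N d × Strat N d | z.2 i ∈ A i z.1} := by
        ext z; simp [hF]
      rw [this]
      refine isClosed_iInter fun i => ?_
      exact (hAclosed i).preimage (f := fun z : Strat N d × Strat N d => (z.1, z.2 i))
        (continuous_fst.prodMk ((PiLp.continuous_apply 2 _ i).comp continuous_snd)))
  -- coordinates
  have hyi : ∀ i, y i ∈ closure (convexHull ℝ (A i y)) := by
    intro i
    let π : Strat N d →L[ℝ] Vec (d i) := PiLp.proj 2 (fun i : Fin N => Vec (d i)) i
    have h1 : π y ∈ closure (π '' convexHull ℝ (F y)) :=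
      image_closure_subset_closure_image π.continuous (Set.mem_image_of_mem π hy)
    refine closure_mono ?_ h1
    have h2 := π.toLinearMap.image_convexHull (F y)
    have h3 : π '' convexHull ℝ (F y) = convexHull ℝ (π '' F y) := h2
    rw [h3]
    apply convexHull_mono
    rintro _ ⟨z, hz, rfl⟩
    exact hz i
  have hyK : ∀ i, y i ∈ Ki i (p y) := fun i =>
    closure_minimal (convexHull_min (fun z hz => hz.1) (hbval i _ (hp y).1).2) (hKcl i y) (hyi i)
  have hyQ : y ∈ Q := by
    rw [hQ]
    exact fun i => subset_convexHull ℝ _ (hKsub i y (hyK i))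
  refine ⟨p y, (hp y).1, y, (hp y).2, fun i => ⟨hyK i, ?_⟩⟩
  by_contra hnon
  obtain ⟨w, hwP, hwK⟩ := Set.nonempty_iff_ne_empty.2 hnon
  have hni := hd i y hyQ
  have hGne : ((G i)ᶜ).Nonempty :=
    ⟨(y, y i), fun hmem => hni (subset_convexHull ℝ _ hmem)⟩
  have hwpos : 0 < U i (y, w) :=
    ((hc i).isClosed_compl.notMem_iff_infDist_pos hGne).1 (fun hn => hn hwP)
  have hAP : A i y ⊆ P i y := by
    intro z hz
    by_contra hzP
    have h0 : U i (y, z) = 0 := Metric.infDist_zero_of_mem (show (y, z) ∈ (G i)ᶜ from hzP)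
    linarith [hz.2 w hwK]
  have hPo : IsOpen (P i y) := (hc i).preimage (Continuous.prodMk_right y)
  obtain ⟨f, hf⟩ := geometric_hahn_banach_open_point (convex_convexHull ℝ (P i y))
    hPo.convexHull hni
  have hAcl : IsClosed (A i y) := (hAclosed i).preimage (Continuous.prodMk_right y)
  have hAc : IsCompact (A i y) := (hKcomp i y).of_isClosed_subset hAcl (fun z hz => hz.1)
  obtain ⟨z, hz, hmax⟩ := hAc.exists_isMaxOn (hAne i y) f.continuous.continuousOn
  have hle : f (y i) ≤ f z := by
    have hsub : convexHull ℝ (A i y) ⊆ {x | f x ≤ f z} :=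
      convexHull_min (fun x hx => hmax hx) (convex_halfSpace_le f.toLinearMap.isLinear _)
    exact closure_minimal hsub (isClosed_le f.continuous continuous_const) (hyi i)
  exact absurd (hf z (subset_convexHull ℝ _ (hAP hz))) (not_lt.2 hle)
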